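/- arXiv:gr-qc/0310040 — 2 statements merged into one kernel-verified Lean document; each statement's English description precedes it below -/
import Mathlib

section
/- Bootstrap exponential estimates for ν and λ: Fix α > 1. Let (r, m, φ) be a solution on D satisfying the characteristic initial conditions with parameters C, M, m₀. (i) Let (u, v) ∈ D with {u} × [R, v] ⊆ D, and suppose on this segment λ > 0, ν < 0, r ≥ R, 1 − μ ≥ 1/(2α), and 0 ≤ m ≤ 2αM. Then ν(u, v) ≥ −exp(8α²M/R); in particular, if R > 8α²M/log α, then ν(u, v) > −α. (ii) Let (u, v) ∈ D with [u, −R] × {v} ⊆ D, and suppose on this segment λ > 0, ν < 0, r ≥ R, 1 − μ ≥ 1/(2α), and 0 ≤ m ≤ 2αM. Then λ(u, v) ≤ exp(8α²M/R); in particular, if R > 8α²M/log α, then λ(u, v) < α. -/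
/-!
Along an outgoing segment put `x = -ν`, `ρ' = λ`; along an ingoing segment traversed in the
direction of decreasing `u` put `x = λ`, `ρ' = -ν`. In both cases the field equations read
`x' = x (2ρ' / (1 - μ)) (m / ρ²)` with `x`, `ρ' > 0` and `x = 1` at the initial point, and the
bootstrap bounds give `x' / x ≤ K ρ' / ρ²` with `K = 8α²M`. The right-hand side is the derivative
of `-K / ρ`, so `log x + K / ρ` is nonincreasing, whence `log x ≤ K / R`
(`le_exp_of_transport`). The chain rule on `D` holds because `D`, being relatively open
in a quadrant, has unique derivatives (`EFSol.uniqueDiffOn`).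
-/

open Set Real

noncomputable section

/-- The quadrant `Q_R = (-∞, -R] × [R, ∞)` in null coordinates `(u, v)`. -/
def Quad (R : ℝ) : Set (ℝ × ℝ) := Iic (-R) ×ˢ Ici R

/-- Partial derivative in the `u` (first) direction, within the set `D`. -/
def pdu (D : Set (ℝ × ℝ)) (f : ℝ × ℝ → ℝ) (p : ℝ × ℝ) : ℝ :=
  fderivWithin ℝ f D p (1, 0)

/-- Partial derivative in the `v` (second) direction, within the set `D`. -/
def pdv (D : Set (ℝ × ℝ)) (f : ℝ × ℝ → ℝ) (p : ℝ × ℝ) : ℝ :=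
  fderivWithin ℝ f D p (0, 1)

/-- `D` is a past set in `Q_R`: with `(u,v) ∈ D`, any `(ũ,ṽ) ∈ Q_R` with
`ũ ≥ u`, `ṽ ≤ v` lies in `D`. -/
def IsPastSet (R : ℝ) (D : Set (ℝ × ℝ)) : Prop :=
  ∀ p ∈ D, ∀ q ∈ Quad R, p.1 ≤ q.1 → q.2 ≤ p.2 → q ∈ D

/-- A solution of the spherically symmetric Einstein–scalar field system on a
relatively open subset `D ⊆ Q_R`.  Writing `ν = ∂r/∂u`, `λ = ∂r/∂v`,
`ζ = r ∂φ/∂u`, `θ = r ∂φ/∂v`, `μ = 2m/r`, the equations are: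
`∂λ/∂u = λ (2ν/(1-μ)) (m/r²)`, `∂ν/∂v = ν (2λ/(1-μ)) (m/r²)`,
`ν ∂m/∂u = ½(1-μ)ζ²`, `λ ∂m/∂v = ½(1-μ)θ²`,
`∂θ/∂u = -ζλ/r`, `∂ζ/∂v = -θν/r`. -/
structure EFSol (R : ℝ) (D : Set (ℝ × ℝ)) (r m φ : ℝ × ℝ → ℝ) : Prop where
  subset : D ⊆ Quad R
  relOpen : ∃ U : Set (ℝ × ℝ), IsOpen U ∧ D = U ∩ Quad R
  hr : ContDiffOn ℝ 2 r D
  hm : ContDiffOn ℝ 2 m D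
  hphi : ContDiffOn ℝ 2 φ D
  rpos : ∀ p ∈ D, 0 < r p
  mu_ne : ∀ p ∈ D, 2 * m p ≠ r p
  eq_lam : ∀ p ∈ D, pdu D (fun q => pdv D r q) p
      = pdv D r p * (2 * pdu D r p / (1 - 2 * m p / r p)) * (m p / (r p) ^ 2)
  eq_nu : ∀ p ∈ D, pdv D (fun q => pdu D r q) p
      = pdu D r p * (2 * pdv D r p / (1 - 2 * m p / r p)) * (m p / (r p) ^ 2)
  eq_mu : ∀ p ∈ D, pdu D r p * pdu D m p
      = (1 / 2) * (1 - 2 * m p / r p) * (r p * pdu D φ p) ^ 2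
  eq_mv : ∀ p ∈ D, pdv D r p * pdv D m p
      = (1 / 2) * (1 - 2 * m p / r p) * (r p * pdv D φ p) ^ 2
  eq_theta : ∀ p ∈ D, pdu D (fun q => r q * pdv D φ q) p
      = -(r p * pdu D φ p) * pdv D r p / r p
  eq_zeta : ∀ p ∈ D, pdv D (fun q => r q * pdu D φ q) p
      = -(r p * pdv D φ p) * pdu D r p / r p

/-- Characteristic initial conditions with parameters `C`, `M`, `m₀`, posed on the
rays `{-R} × [R,∞)` (where `λ = 1`, `|rφ| ≤ C`, `m ≤ M`) and
`(-∞,-R] × {R}` (where `ν = -1`, `|∂_u(rφ)| ≤ C/u²`, `m ≤ M`), with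
`r(-R,R) = R` and `m(-R,R) = m₀`, on a past set `D`. -/
structure CharIC (R C M m₀ : ℝ) (D : Set (ℝ × ℝ)) (r m φ : ℝ × ℝ → ℝ) : Prop where
  past : IsPastSet R D
  ray_out : ∀ v ≥ R, ((-R, v) : ℝ × ℝ) ∈ D
  ray_in : ∀ u ≤ -R, ((u, R) : ℝ × ℝ) ∈ D
  r_corner : r (-R, R) = R
  m_corner : m (-R, R) = m₀
  lam_one : ∀ v ≥ R, pdv D r (-R, v) = 1
  rphi_bound : ∀ v ≥ R, |r (-R, v) * φ (-R, v)| ≤ C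
  m_bound_out : ∀ v ≥ R, m (-R, v) ≤ M
  nu_one : ∀ u ≤ -R, pdu D r (u, R) = -1
  durphi_bound : ∀ u ≤ -R, |pdu D (fun q => r q * φ q) (u, R)| ≤ C / u ^ 2
  m_bound_in : ∀ u ≤ -R, m (u, R) ≤ M

end

open Set Real

/-- The common integration argument for `-ν` and `λ`: the transport equation
`x' = x (2ρ' / (1 - 2m/ρ)) (m / ρ²)` with `x a = 1` keeps `x` below `exp (8α²M / R)`. -/
lemma le_exp_of_transport {R M α a b : ℝ} (hα : 1 < α) (hM : 0 < M) (hR : 0 < R) (hab : a ≤ b)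
    {x ρ ρ' m : ℝ → ℝ} (hxa : x a = 1)
    (hx : ∀ t ∈ Icc a b, HasDerivWithinAt x
      (x t * (2 * ρ' t / (1 - 2 * m t / ρ t)) * (m t / ρ t ^ 2)) (Icc a b) t)
    (hρ : ∀ t ∈ Icc a b, HasDerivWithinAt ρ (ρ' t) (Icc a b) t)
    (hb : ∀ t ∈ Icc a b, 0 < x t ∧ 0 < ρ' t ∧ R ≤ ρ t ∧
      1 / (2 * α) ≤ 1 - 2 * m t / ρ t ∧ 0 ≤ m t ∧ m t ≤ 2 * α * M) :
    x b ≤ Real.exp (8 * α ^ 2 * M / R) := by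
  set K := 8 * α ^ 2 * M with hK
  have hK0 : 0 < K := by positivity
  have hF : ∀ t ∈ Icc a b, HasDerivWithinAt (fun t => Real.log (x t) + K * (ρ t)⁻¹)
      ((x t * (2 * ρ' t / (1 - 2 * m t / ρ t)) * (m t / ρ t ^ 2)) / x t
        + K * (-ρ' t / ρ t ^ 2)) (Icc a b) t := by
    intro t ht
    obtain ⟨h1, -, h3, -⟩ := hb t ht
    exact ((hx t ht).log h1.ne').add (((hρ t ht).fun_inv (by linarith)).const_mul K)
  have hanti : AntitoneOn (fun t => Real.log (x t) + K * (ρ t)⁻¹) (Icc a b) := by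
    refine antitoneOn_of_hasDerivWithinAt_nonpos (convex_Icc a b)
      (fun t ht => (hF t ht).continuousWithinAt)
      (fun t ht => (hF t (interior_subset ht)).mono interior_subset) ?_
    intro t ht
    obtain ⟨h1, h2, h3, h4, h5, h6⟩ := hb t (interior_subset ht)
    have hr : 0 < ρ t := by linarith
    have h40 : 0 < 1 / (2 * α) := by positivity
    set w := 1 - 2 * m t / ρ t
    have hw : 0 < w := by linarith
    -- `m / (1 - μ) ≤ 2αM · 2α`, so `2 m / (1 - μ) ≤ K`
    have hmw : 2 * m t / w ≤ K := by
      rw [div_le_iff₀ hw]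
      have : K * (1 / (2 * α)) = 2 * (2 * α * M) := by rw [hK]; field_simp; ring
      nlinarith [mul_le_mul_of_nonneg_left h4 hK0.le]
    have e : x t * (2 * ρ' t / w) * (m t / ρ t ^ 2) / x t + K * (-ρ' t / ρ t ^ 2)
        = (2 * m t / w - K) * (ρ' t / ρ t ^ 2) := by
      field_simp
      ring
    rw [e]
    exact mul_nonpos_of_nonpos_of_nonneg (by linarith) (by positivity)
  have h := hanti (left_mem_Icc.2 hab) (right_mem_Icc.2 hab) hab
  obtain ⟨-, -, ha3, -⟩ := hb a (left_mem_Icc.2 hab)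
  obtain ⟨hb1, -, hb3, -⟩ := hb b (right_mem_Icc.2 hab)
  simp only [hxa, Real.log_one, zero_add] at h
  have h1 : 0 ≤ K * (ρ b)⁻¹ := mul_nonneg hK0.le (inv_nonneg.2 (by linarith))
  have h2 : K * (ρ a)⁻¹ ≤ K / R := by
    rw [div_eq_mul_inv]
    gcongr
  exact (Real.log_le_iff_le_exp hb1).1 (by linarith)

lemma exp_lt_of_large {R M α : ℝ} (hα : 1 < α) (hR : 0 < R)
    (h : R > 8 * α ^ 2 * M / Real.log α) : Real.exp (8 * α ^ 2 * M / R) < α := by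
  rw [← Real.lt_log_iff_exp_lt (by linarith), div_lt_iff₀ hR]
  rwa [gt_iff_lt, div_lt_iff₀ (Real.log_pos hα), mul_comm R] at h

lemma EFSol.uniqueDiffOn {R : ℝ} {D : Set (ℝ × ℝ)} {r m φ : ℝ × ℝ → ℝ}
    (h : EFSol R D r m φ) : UniqueDiffOn ℝ D := by
  obtain ⟨U, hU, rfl⟩ := h.relOpen
  rw [inter_comm]
  exact ((uniqueDiffOn_Iic _).prod (uniqueDiffOn_Ici _)).inter hU

lemma EFSol.differentiableOn_fderiv {R : ℝ} {D : Set (ℝ × ℝ)} {r m φ : ℝ × ℝ → ℝ}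
    (h : EFSol R D r m φ) (e : ℝ × ℝ) :
    DifferentiableOn ℝ (fun q => fderivWithin ℝ r D q e) D :=
  ((h.hr.fderivWithin (m := 1) h.uniqueDiffOn (by norm_num)).differentiableOn
    (by norm_num)).clm_apply (differentiableOn_const e)

lemma hasDerivWithinAt_pdv {D : Set (ℝ × ℝ)} {f : ℝ × ℝ → ℝ} {u : ℝ} {I : Set ℝ}
    (hf : DifferentiableOn ℝ f D) (hI : ∀ t ∈ I, (u, t) ∈ D) {t : ℝ} (ht : t ∈ I) :
    HasDerivWithinAt (fun t => f (u, t)) (pdv D f (u, t)) I t :=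
  (hf _ (hI t ht)).hasFDerivWithinAt.comp_hasDerivWithinAt t
    ((hasDerivWithinAt_const t I u).prodMk (hasDerivWithinAt_id t I)) hI

/-- The `u`-derivative along a segment traversed towards decreasing `u`. -/
lemma hasDerivWithinAt_neg_pdu {D : Set (ℝ × ℝ)} {f : ℝ × ℝ → ℝ} {v : ℝ} {I : Set ℝ}
    (hf : DifferentiableOn ℝ f D) (hI : ∀ t ∈ I, (-t, v) ∈ D) {t : ℝ} (ht : t ∈ I) :
    HasDerivWithinAt (fun t => f (-t, v)) (-pdu D f (-t, v)) I t := by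
  have h := (hf _ (hI t ht)).hasFDerivWithinAt.comp_hasDerivWithinAt t
    ((hasDerivWithinAt_id t I).neg.prodMk (hasDerivWithinAt_const t I v)) hI
  have e : ((-1 : ℝ), (0 : ℝ)) = -((1 : ℝ), (0 : ℝ)) := by simp
  rw [e, map_neg] at h
  exact h

/-- Bootstrap exponential estimates for `ν` and `λ`.
(i) If on the segment `{u} × [R,v] ⊆ D` one has `λ > 0`, `ν < 0`, `r ≥ R`,
`1-μ ≥ 1/(2α)`, `0 ≤ m ≤ 2αM`, then `ν(u,v) ≥ -exp(8α²M/R)`; in particular,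
if `R > 8α²M/log α`, then `ν(u,v) > -α`.
(ii) If on the segment `[u,-R] × {v} ⊆ D` the same pointwise bounds hold,
then `λ(u,v) ≤ exp(8α²M/R)`; in particular, if `R > 8α²M/log α`, then
`λ(u,v) < α`. -/
theorem bootstrap_nu_lam (R C M m₀ α : ℝ) (hα : 1 < α) (hC : 0 < C)
    (hM : 0 < M) (hm₀ : m₀ ∈ Icc 0 M) (hR : 0 < R)
    (D : Set (ℝ × ℝ)) (r m φ : ℝ × ℝ → ℝ) (hsol : EFSol R D r m φ)
    (hic : CharIC R C M m₀ D r m φ) :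
    (∀ u v : ℝ, ((u, v) : ℝ × ℝ) ∈ D →
      (∀ t ∈ Icc R v, ((u, t) : ℝ × ℝ) ∈ D) →
      (∀ t ∈ Icc R v,
        0 < pdv D r (u, t) ∧ pdu D r (u, t) < 0 ∧ R ≤ r (u, t) ∧
        1 / (2 * α) ≤ 1 - 2 * m (u, t) / r (u, t) ∧
        (0 ≤ m (u, t) ∧ m (u, t) ≤ 2 * α * M)) →
      (-Real.exp (8 * α ^ 2 * M / R) ≤ pdu D r (u, v) ∧
        (R > 8 * α ^ 2 * M / Real.log α → -α < pdu D r (u, v)))) ∧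
    (∀ u v : ℝ, ((u, v) : ℝ × ℝ) ∈ D →
      (∀ t ∈ Icc u (-R), ((t, v) : ℝ × ℝ) ∈ D) →
      (∀ t ∈ Icc u (-R),
        0 < pdv D r (t, v) ∧ pdu D r (t, v) < 0 ∧ R ≤ r (t, v) ∧
        1 / (2 * α) ≤ 1 - 2 * m (t, v) / r (t, v) ∧
        (0 ≤ m (t, v) ∧ m (t, v) ≤ 2 * α * M)) →
      (pdv D r (u, v) ≤ Real.exp (8 * α ^ 2 * M / R) ∧
        (R > 8 * α ^ 2 * M / Real.log α → pdv D r (u, v) < α))) := by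
  have hdr : DifferentiableOn ℝ r D := hsol.hr.differentiableOn (by norm_num)
  constructor
  · intro u v huv hD hb
    have key : -pdu D r (u, v) ≤ Real.exp (8 * α ^ 2 * M / R) := by
      refine le_exp_of_transport (x := fun t => -pdu D r (u, t)) (ρ := fun t => r (u, t))
        (ρ' := fun t => pdv D r (u, t)) (m := fun t => m (u, t)) hα hM hR
        (hsol.subset huv).2 ?_ ?_ (fun t ht => hasDerivWithinAt_pdv hdr hD ht) ?_
      · simp [hic.nu_one u (hsol.subset huv).1]
      · intro t ht
        have h := (hasDerivWithinAt_pdv (hsol.differentiableOn_fderiv (1, 0)) hD ht).fun_neg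
        refine h.congr_deriv ?_
        have h' := hsol.eq_nu _ (hD t ht)
        simp only [pdu] at h' ⊢
        rw [h']
        ring
      · intro t ht
        obtain ⟨h1, h2, h3⟩ := hb t ht
        exact ⟨neg_pos.2 h2, h1, h3⟩
    refine ⟨by linarith, fun h => ?_⟩
    linarith [exp_lt_of_large hα hR h]
  · intro u v huv hD hb
    have hmem : ∀ t ∈ Icc R (-u), -t ∈ Icc u (-R) :=
      fun t ht => ⟨by linarith [ht.2], by linarith [ht.1]⟩
    have key : pdv D r (u, v) ≤ Real.exp (8 * α ^ 2 * M / R) := by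
      have hD' : ∀ t ∈ Icc R (-u), (-t, v) ∈ D := fun t ht => hD _ (hmem t ht)
      have hu : u ≤ -R := (hsol.subset huv).1
      have h := le_exp_of_transport (x := fun t => pdv D r (-t, v)) (ρ := fun t => r (-t, v))
        (ρ' := fun t => -pdu D r (-t, v)) (m := fun t => m (-t, v)) hα hM hR
        (a := R) (b := -u) (by linarith) (hic.lam_one v (hsol.subset huv).2) ?_
        (fun t ht => hasDerivWithinAt_neg_pdu hdr hD' ht) ?_
      · simpa using h
      · intro t ht
        have h := hasDerivWithinAt_neg_pdu (hsol.differentiableOn_fderiv (0, 1)) hD' ht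
        refine h.congr_deriv ?_
        have h' := hsol.eq_lam _ (hD' t ht)
        simp only [pdv] at h' ⊢
        rw [h']
        ring
      · intro t ht
        obtain ⟨h1, h2, h3⟩ := hb _ (hmem t ht)
        exact ⟨h1, neg_pos.2 h2, h3⟩
    exact ⟨key, fun h => key.trans_lt (exp_lt_of_large hα hR h)⟩
end

section
/- Bootstrap estimate for the mass: Fix α > 1. Let (r, m, φ) be a solution on D satisfying the characteristic initial conditions with parameters C, M, m₀. Let (u, v) ∈ D be such that the segment [u, −R] × {v} is contained in D, and suppose that on this segment: ν ≤ −1, |ν| ≤ 2α, 0 < 1 − μ ≤ 1, r ≥ R, |rφ| ≤ 2αC, and |ζ + νφ|(ũ, v) ≤ 2αC·|ũ|^(−3/2) for all ũ ∈ [u, −R]. Then m(u, v) ≤ M + 2α²C²R⁻² + 4α²C²R⁻¹; moreover, if in addition R ≥ 1 and 6α²C² < (α−1)MR, then m(u, v) < αM. -/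
/-! Along the segment `[u, -R] × {v}` the mass equation gives
`-∂ᵤm = ½ (1 - μ) ζ² / |ν|`. Writing `ζ = (ζ + νφ) - νφ` and using `1 - μ ≤ 1`, `|ν| ≥ 1`,
`ζ² ≤ 2 (ζ + νφ)² + 2 ν²φ²` and the bootstrap bounds, with `K = 4α²C²`,
`-∂ᵤm ≤ K |ũ|⁻³ + K |ν| / r²` (`mass_deriv_lower_bound`).
Both terms on the right have explicit primitives, since `ν = ∂ᵤr`: the function
`m + (K/2) ũ⁻² + K / r` is nondecreasing in `ũ` on `[u, -R]`. Comparing its values at the endpoints,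
where `m(-R, v) ≤ M` and `r(-R, v) ≥ R`, gives the estimate; the strict bound `m < αM` follows
since `2/R² + 4/R ≤ 6/R` when `R ≥ 1`. -/

open Set Real

open Set Real

/-- Membership of the horizontal segment in `D` turns the derivative within `D` in the `u` direction
into a one-variable derivative; no unique differentiability of `D` is needed. -/
lemma hasDerivWithinAt_pdu {D : Set (ℝ × ℝ)} {f : ℝ × ℝ → ℝ} (hf : ContDiffOn ℝ 2 f D)
    {v a b : ℝ} (hseg : ∀ t ∈ Icc a b, ((t, v) : ℝ × ℝ) ∈ D) {t : ℝ} (ht : t ∈ Icc a b) :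
    HasDerivWithinAt (fun s => f (s, v)) (pdu D f (t, v)) (Icc a b) t := by
  have h1 : HasFDerivWithinAt f (fderivWithin ℝ f D (t, v)) D (t, v) :=
    ((hf.differentiableOn (by norm_num)) _ (hseg t ht)).hasFDerivWithinAt
  have h2 : HasDerivWithinAt (fun s : ℝ => ((s, v) : ℝ × ℝ)) (1, 0) (Icc a b) t :=
    (hasDerivWithinAt_id t _).prodMk (hasDerivWithinAt_const t _ v)
  exact h1.comp_hasDerivWithinAt t h2 hseg

/-- Pointwise lower bound for the derivative `d = ∂ᵤm`, with `n = ν`, `k = 1 - μ`, `z = ζ`,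
`ρ = r`, `p = φ`, `B = 2αC` and `w = |ũ|⁻³`. -/
lemma mass_deriv_lower_bound {n d k z ρ p B s w : ℝ} (hn : n ≤ -1) (hk1 : k ≤ 1)
    (hρ : 0 < ρ) (heq : n * d = 1 / 2 * k * z ^ 2) (hp : |ρ * p| ≤ B) (hz : |z + n * p| ≤ B * s)
    (hs : s ^ 2 = w) :
    B ^ 2 * n / ρ ^ 2 - B ^ 2 * w ≤ d := by
  have hA : (z + n * p) ^ 2 ≤ B ^ 2 * w := by
    rw [← hs, ← mul_pow]; exact sq_le_sq' (abs_le.mp hz).1 (abs_le.mp hz).2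
  have hP : p ^ 2 ≤ B ^ 2 / ρ ^ 2 := by
    rw [le_div_iff₀ (by positivity), ← mul_pow, mul_comm]
    exact sq_le_sq' (abs_le.mp hp).1 (abs_le.mp hp).2
  have hw : 0 ≤ B ^ 2 * w := (sq_nonneg _).trans hA
  have h1 : 1 / 2 * k * z ^ 2 ≤ 1 / 2 * z ^ 2 := by nlinarith [sq_nonneg z]
  have h2 : 1 / 2 * z ^ 2 ≤ (z + n * p) ^ 2 + n ^ 2 * p ^ 2 := by
    nlinarith [sq_nonneg (z + 2 * (n * p))]
  have h3 : n ^ 2 * p ^ 2 ≤ n ^ 2 * (B ^ 2 / ρ ^ 2) :=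
    mul_le_mul_of_nonneg_left hP (sq_nonneg n)
  have h4 : B ^ 2 * w ≤ -n * (B ^ 2 * w) := by nlinarith
  have h5 : -n * (B ^ 2 * n / ρ ^ 2 - B ^ 2 * w) ≤ -n * d := by
    have : -n * (B ^ 2 * n / ρ ^ 2 - B ^ 2 * w)
        = -(n ^ 2 * (B ^ 2 / ρ ^ 2)) - (-n * (B ^ 2 * w)) := by ring
    rw [this]; linarith
  exact le_of_mul_le_mul_left h5 (by linarith)

/-- Bootstrap estimate for the mass.  With `α > 1`, if on the
segment `[u,-R] × {v} ⊆ D` one has `ν ≤ -1`, `|ν| ≤ 2α`, `0 < 1-μ ≤ 1`,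
`r ≥ R`, `|rφ| ≤ 2αC` and `|ζ + νφ|(ũ,v) ≤ 2αC|ũ|^(-3/2)`, then
`m(u,v) ≤ M + 2α²C²R⁻² + 4α²C²R⁻¹`; if moreover `R ≥ 1` and
`6α²C² < (α-1)MR`, then `m(u,v) < αM`. -/
theorem bootstrap_mass (R C M m₀ α : ℝ) (hα : 1 < α) (hC : 0 < C)
    (hM : 0 < M) (hm₀ : m₀ ∈ Icc 0 M) (hR : 0 < R)
    (D : Set (ℝ × ℝ)) (r m φ : ℝ × ℝ → ℝ) (hsol : EFSol R D r m φ)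
    (hic : CharIC R C M m₀ D r m φ) (u v : ℝ) (huv : ((u, v) : ℝ × ℝ) ∈ D)
    (hseg : ∀ t ∈ Icc u (-R), ((t, v) : ℝ × ℝ) ∈ D)
    (hcond : ∀ t ∈ Icc u (-R),
      pdu D r (t, v) ≤ -1 ∧ |pdu D r (t, v)| ≤ 2 * α ∧
      (0 < 1 - 2 * m (t, v) / r (t, v) ∧ 1 - 2 * m (t, v) / r (t, v) ≤ 1) ∧
      R ≤ r (t, v) ∧ |r (t, v) * φ (t, v)| ≤ 2 * α * C ∧
      |r (t, v) * pdu D φ (t, v) + pdu D r (t, v) * φ (t, v)|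
        ≤ 2 * α * C * |t| ^ (-(3 : ℝ) / 2)) :
    m (u, v) ≤ M + 2 * α ^ 2 * C ^ 2 / R ^ 2 + 4 * α ^ 2 * C ^ 2 / R ∧
    (1 ≤ R → 6 * α ^ 2 * C ^ 2 < (α - 1) * M * R → m (u, v) < α * M) := by
  have hpos : ∀ t ∈ Icc u (-R), 0 < r (t, v) := fun t ht => hsol.rpos _ (hseg t ht)
  have hu : u ≤ -R := (hsol.subset huv).1
  have hv : R ≤ v := (hsol.subset huv).2
  set B := 2 * α * C with hB
  -- The monotone quantity and its derivative along the segment.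
  have hder : ∀ t ∈ Icc u (-R), HasDerivWithinAt
      (fun s => m (s, v) + B ^ 2 / 2 * (s ^ 2)⁻¹ + B ^ 2 * (r (s, v))⁻¹)
      (pdu D m (t, v) + B ^ 2 / 2 * (-(2 * t) / (t ^ 2) ^ 2)
        + B ^ 2 * (-pdu D r (t, v) / (r (t, v)) ^ 2)) (Icc u (-R)) t := by
    intro t ht
    have ht0 : t ≠ 0 := by linarith [ht.2] |> fun h : t < 0 => h.ne
    have hsq : HasDerivWithinAt (fun s : ℝ => s ^ 2) (2 * t) (Icc u (-R)) t := by
      simpa using (hasDerivWithinAt_id t (Icc u (-R))).fun_pow 2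
    exact ((hasDerivWithinAt_pdu hsol.hm hseg ht).fun_add
      ((hsq.fun_inv (pow_ne_zero 2 ht0)).const_mul _)).fun_add
      (((hasDerivWithinAt_pdu hsol.hr hseg ht).fun_inv (hpos t ht).ne').const_mul _)
  have hmono := monotoneOn_of_hasDerivWithinAt_nonneg (convex_Icc u (-R))
    (fun t ht => (hder t ht).continuousWithinAt)
    (fun t ht => (hder t (interior_subset ht)).mono interior_subset)
    (fun t ht' => by
      have ht := interior_subset ht'
      obtain ⟨hν, -, ⟨-, hk1⟩, -, hφ, hζ⟩ := hcond t ht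
      have ht0 : t < 0 := by linarith [ht.2]
      have hs : (|t| ^ (-(3 : ℝ) / 2)) ^ 2 = (|t| ^ 3)⁻¹ := by
        rw [← rpow_natCast (|t| ^ (-(3 : ℝ) / 2)), ← rpow_mul (abs_nonneg t),
          ← rpow_natCast |t| 3, ← rpow_neg (abs_nonneg t)]
        norm_num
      have h := mass_deriv_lower_bound hν hk1 (hpos t ht) (hsol.eq_mu _ (hseg t ht)) hφ hζ hs
      rw [abs_of_neg ht0] at h
      have e1 : B ^ 2 / 2 * (-(2 * t) / (t ^ 2) ^ 2) = B ^ 2 * ((-t) ^ 3)⁻¹ := by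
        have := ht0.ne
        rw [Odd.neg_pow (by decide)]
        field_simp
      have e2 : B ^ 2 * (-pdu D r (t, v) / (r (t, v)) ^ 2)
          = -(B ^ 2 * pdu D r (t, v) / (r (t, v)) ^ 2) := by ring
      rw [e1, e2]
      linarith)
  have hcmp := hmono (left_mem_Icc.mpr hu) (right_mem_Icc.mpr hu) hu
  simp only at hcmp
  have hmR := hic.m_bound_out v hv
  have hrR : (r (-R, v))⁻¹ ≤ R⁻¹ := inv_anti₀ hR (hcond _ (right_mem_Icc.mpr hu)).2.2.2.1
  have hru : 0 ≤ B ^ 2 * (r (u, v))⁻¹ := by have := hpos u (left_mem_Icc.mpr hu); positivity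
  have huu : 0 ≤ B ^ 2 / 2 * (u ^ 2)⁻¹ := by positivity
  have hBr : B ^ 2 * (r (-R, v))⁻¹ ≤ B ^ 2 * R⁻¹ := mul_le_mul_of_nonneg_left hrR (sq_nonneg B)
  have hmain : m (u, v) ≤ M + 2 * α ^ 2 * C ^ 2 / R ^ 2 + 4 * α ^ 2 * C ^ 2 / R := by
    have e : M + 2 * α ^ 2 * C ^ 2 / R ^ 2 + 4 * α ^ 2 * C ^ 2 / R
        = M + B ^ 2 / 2 * ((-R) ^ 2)⁻¹ + B ^ 2 * R⁻¹ := by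
      rw [hB, neg_sq]; ring
    rw [e]; linarith
  refine ⟨hmain, fun hR1 hlarge => ?_⟩
  have h1 : 2 * α ^ 2 * C ^ 2 / R ^ 2 ≤ 2 * α ^ 2 * C ^ 2 / R :=
    div_le_div_of_nonneg_left (by positivity) hR (by nlinarith)
  have h2 : 6 * α ^ 2 * C ^ 2 / R < (α - 1) * M := (div_lt_iff₀ hR).mpr hlarge
  have h3 : 2 * α ^ 2 * C ^ 2 / R + 4 * α ^ 2 * C ^ 2 / R = 6 * α ^ 2 * C ^ 2 / R := by ring
  linarith
end
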